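/- Assume the Riemann Hypothesis. Then for every real x with log x ≥ 20, Σ_{2 ≤ n ≤ x} Λ(n)/( n^{1/2 + 1/(2 log x)} · log n ) · (log(x/n)/log x) ≤ 3.675 · x^{1/2}/(log x)². -/

import Mathlib

/-!
The bound follows from a Chebyshev-type argument. Write the sum as `∑ Λ n * F n`, where `F` is
nonnegative, decreasing and convex. Because `F` in addition decays like `t ^ (-1 / 2)`, it satisfies
`F n ≤ ∑ ν_d ∑_k F (d k n)` for the coefficients `ν_1 = 1`, `ν_2 = ν_3 = -1`, `ν_6 = -(1 + c)`,
`ν_12 = 2 c` with a small `c > 0`. Summing against `Λ` and using `∑_{n ∣ m} Λ n = log m` removes the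
primes: what remains is `∑ ν_d ∑_k log k * F (d k)`. Here `log k = log (d k) - log d`; since
`∑ ν_d / d = 0`, the sums of `log t * F t` over the multiples of `d` cancel up to a constant, and
the main term is `-∑ ν_d log d / d ≈ 1.008` times `∫ F`. Convexity bounds each sum of `F` by that
integral through the midpoint rule, and substituting for `log t` turns the integral into the
exponential integral, which is bounded explicitly.
-/

open Set MeasureTheory

/-- The class of nonnegative, nonincreasing, convex functions on a set `s` of reals, which is closed
under products. Every weight below belongs to it. -/
structure ConvexDecayOn (s : Set ℝ) (f : ℝ → ℝ) : Prop where
  convexOn : ConvexOn ℝ s f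
  antitoneOn : AntitoneOn f s
  nonneg : ∀ ⦃t⦄, t ∈ s → 0 ≤ f t

namespace ConvexDecayOn

variable {s t : Set ℝ} {f g : ℝ → ℝ}

theorem mono (hf : ConvexDecayOn t f) (hst : s ⊆ t) (hs : Convex ℝ s) : ConvexDecayOn s f :=
  ⟨hf.convexOn.subset hst hs, hf.antitoneOn.mono hst, fun _ hx => hf.nonneg (hst hx)⟩

theorem congr (hf : ConvexDecayOn s f) (hfg : EqOn f g s) : ConvexDecayOn s g :=
  ⟨hf.convexOn.congr hfg, hf.antitoneOn.congr hfg, fun _ hx => hfg hx ▸ hf.nonneg hx⟩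

theorem mul (hf : ConvexDecayOn s f) (hg : ConvexDecayOn s g) :
    ConvexDecayOn s fun x => f x * g x where
  convexOn := hf.convexOn.mul hg.convexOn hf.nonneg hg.nonneg
    (hf.antitoneOn.monovaryOn hg.antitoneOn)
  antitoneOn _ hx _ hy hxy :=
    mul_le_mul (hf.antitoneOn hx hy hxy) (hg.antitoneOn hx hy hxy) (hg.nonneg hy) (hf.nonneg hx)
  nonneg _ hx := mul_nonneg (hf.nonneg hx) (hg.nonneg hx)

theorem const_mul {c : ℝ} (hc : 0 ≤ c) (hf : ConvexDecayOn s f) :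
    ConvexDecayOn s fun x => c * f x where
  convexOn := hf.convexOn.smul hc
  antitoneOn _ hx _ hy hxy := mul_le_mul_of_nonneg_left (hf.antitoneOn hx hy hxy) hc
  nonneg _ hx := mul_nonneg hc (hf.nonneg hx)

theorem max_zero (hf : ConvexOn ℝ s f) (hf' : AntitoneOn f s) :
    ConvexDecayOn s fun x => max (f x) 0 where
  convexOn := hf.sup (convexOn_const 0 hf.1)
  antitoneOn _ hx _ hy hxy := max_le_max_right 0 (hf' hx hy hxy)
  nonneg _ _ := le_max_right _ _

theorem comp (hg : ConvexDecayOn t g) (hf : ConcaveOn ℝ s f) (hf' : MonotoneOn f s)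
    (hst : MapsTo f s t) : ConvexDecayOn s (g ∘ f) where
  convexOn := ⟨hf.1, fun _ hx _ hy _ _ ha hb hab =>
    (hg.antitoneOn (hg.convexOn.1 (hst hx) (hst hy) ha hb hab) (hst (hf.1 hx hy ha hb hab))
      (hf.2 hx hy ha hb hab)).trans (hg.convexOn.2 (hst hx) (hst hy) ha hb hab)⟩
  antitoneOn := hg.antitoneOn.comp_MonotoneOn hf' hst
  nonneg _ hx := hg.nonneg (hst hx)

end ConvexDecayOn

theorem convexDecayOn_rpow_of_le_one {b : ℝ} (hb : 0 < b) (hb' : b ≤ 1) :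
    ConvexDecayOn univ fun u => b ^ u where
  convexOn := convexOn_rpow_left hb
  antitoneOn _ _ _ _ huv := Real.rpow_le_rpow_of_exponent_ge hb hb' huv
  nonneg _ _ := Real.rpow_nonneg hb.le _

theorem convexDecayOn_rpow_neg {α : ℝ} (hα : 0 ≤ α) :
    ConvexDecayOn (Ioi 0) fun x => x ^ (-α) :=
  ((convexDecayOn_rpow_of_le_one (Real.exp_pos (-α)) (Real.exp_le_one_iff.2 (neg_nonpos.2 hα))).comp
    strictConcaveOn_log_Ioi.concaveOn Real.strictMonoOn_log.monotoneOn (mapsTo_univ _ _)).congr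
    fun x hx => by
      rw [Function.comp_apply, ← Real.exp_mul, mul_comm, ← Real.rpow_def_of_pos hx]

theorem increment_le_increment_of_convexOn {s : Set ℝ} {f : ℝ → ℝ} (hf : ConvexOn ℝ s f)
    {x y δ : ℝ} (hx : x ∈ s) (hy : y + δ ∈ s) (hxy : x ≤ y) (hδ : 0 ≤ δ) :
    f (x + δ) - f x ≤ f (y + δ) - f y := by
  rcases hδ.eq_or_lt with rfl | hδ
  · simp
  have hd : 0 < y - x + δ := by linarith
  have hp : 0 ≤ (y - x) / (y - x + δ) := div_nonneg (sub_nonneg.2 hxy) hd.le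
  have hq : 0 ≤ δ / (y - x + δ) := div_nonneg hδ.le hd.le
  have hpq : (y - x) / (y - x + δ) + δ / (y - x + δ) = 1 := by field_simp
  have hleft := hf.2 hx hy hp hq hpq
  have hright := hf.2 hx hy hq hp (by rw [add_comm, hpq])
  simp only [smul_eq_mul] at hleft hright
  rw [show (y - x) / (y - x + δ) * x + δ / (y - x + δ) * (y + δ) = x + δ by field_simp; ring]
    at hleft
  rw [show δ / (y - x + δ) * x + (y - x) / (y - x + δ) * (y + δ) = y by field_simp; ring]
    at hright
  rw [eq_sub_of_add_eq hpq] at hleft hright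
  linarith

theorem two_mul_le_add_of_convexOn {s : Set ℝ} {f : ℝ → ℝ} (hf : ConvexOn ℝ s f) {x δ : ℝ}
    (hx : x ∈ s) (hx' : x + δ + δ ∈ s) (hδ : 0 ≤ δ) : 2 * f (x + δ) ≤ f x + f (x + δ + δ) := by
  linarith [increment_le_increment_of_convexOn hf hx hx' (le_add_of_nonneg_right hδ) hδ]

/-- The sum of `f` over the first `M` multiples of `d`. -/
def multipleSum (f : ℝ → ℝ) (d M : ℕ) : ℝ :=
  ∑ k ∈ Finset.Icc 1 M, f (d * k)

theorem multipleSum_succ (f : ℝ → ℝ) (d M : ℕ) :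
    multipleSum f d (M + 1) = multipleSum f d M + f (d * (M + 1)) := by
  rw [multipleSum, Finset.sum_Icc_succ_top (Nat.le_add_left 1 M), multipleSum, Nat.cast_add_one]

/-- The Chebyshev-type sum `∑ ν_d ∑_k f (d k)` up to `12 N`, with `ν_1 = 1`, `ν_2 = ν_3 = -1`,
`ν_6 = -(1 + c)`, `ν_12 = 2 c`. These satisfy `∑ ν_d / d = 0`, so that the sum stays bounded for
`f` in `ConvexDecayOn`. The larger `c`, the better the final constant; `c = 1 / 32` is about the
largest choice for which `le_sieveSum` holds. -/
noncomputable def sieveSum (f : ℝ → ℝ) (N : ℕ) : ℝ :=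
  multipleSum f 1 (12 * N) - multipleSum f 2 (6 * N) - multipleSum f 3 (4 * N) -
    33 / 32 * multipleSum f 6 (2 * N) + 1 / 16 * multipleSum f 12 N

/-- The sum over `j ≤ M` of the second differences of `f` at `6 j`. -/
def secondDiffSum (f : ℝ → ℝ) (M : ℕ) : ℝ :=
  ∑ j ∈ Finset.Icc 1 M, (f (6 * j - 1) - 2 * f (6 * j) + f (6 * j + 1))

theorem secondDiffSum_succ (f : ℝ → ℝ) (M : ℕ) :
    secondDiffSum f (M + 1) = secondDiffSum f M +
      (f (6 * M + 5) - 2 * f (6 * M + 6) + f (6 * M + 7)) := by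
  rw [secondDiffSum, Finset.sum_Icc_succ_top (Nat.le_add_left 1 M), secondDiffSum]
  push_cast
  ring_nf

theorem sieveSum_eq (f : ℝ → ℝ) (N : ℕ) :
    sieveSum f N = f 1 - f (12 * N + 1) + secondDiffSum f (2 * N) -
      1 / 32 * (multipleSum f 6 (2 * N) - 2 * multipleSum f 12 N) := by
  suffices h : multipleSum f 1 (12 * N) - multipleSum f 2 (6 * N) - multipleSum f 3 (4 * N) -
      multipleSum f 6 (2 * N) = f 1 - f (12 * N + 1) + secondDiffSum f (2 * N) by
    rw [sieveSum]; linarith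
  induction N with
  | zero => simp [multipleSum, secondDiffSum]
  | succ N ih =>
    simp only [mul_add_one, multipleSum_succ, secondDiffSum_succ, ← add_assoc]
    push_cast
    ring_nf at ih ⊢
    linarith

theorem secondDiffSum_le {f : ℝ → ℝ} (hf : ConvexOn ℝ (Ici 5) f) (M : ℕ) :
    secondDiffSum f M ≤ f 5 - f 6 - (f (6 * M + 5) - f (6 * M + 6)) := by
  induction M with
  | zero => simp [secondDiffSum]
  | succ M ih =>
    have h := increment_le_increment_of_convexOn hf (x := 6 * M + 6) (y := 6 * M + 11)
      (δ := 1) (mem_Ici.2 (by linarith)) (mem_Ici.2 (by linarith)) (by linarith) zero_le_one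
    rw [secondDiffSum_succ]
    push_cast
    ring_nf at h ih ⊢
    linarith

theorem le_secondDiffSum {f : ℝ → ℝ} (hf : ConvexOn ℝ (Ici 5) f) {M : ℕ} (hM : 1 ≤ M) :
    f 5 - 2 * f 6 + f 7 ≤ secondDiffSum f M := by
  induction M, hM using Nat.le_induction with
  | base => norm_num [secondDiffSum]
  | succ M _ ih =>
    have h := two_mul_le_add_of_convexOn hf (x := 6 * M + 5)
      (δ := 1) (mem_Ici.2 (by linarith)) (mem_Ici.2 (by linarith)) zero_le_one
    rw [secondDiffSum_succ]
    ring_nf at h ih ⊢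
    linarith

theorem two_mul_multipleSum_twelve_le {f : ℝ → ℝ} (hf : AntitoneOn f (Ici 5)) (N : ℕ) :
    2 * multipleSum f 12 N ≤ multipleSum f 6 (2 * N) := by
  induction N with
  | zero => simp [multipleSum]
  | succ N ih =>
    have h := hf (a := 12 * N + 6) (b := 12 * N + 12) (mem_Ici.2 (by linarith))
      (mem_Ici.2 (by linarith)) (by linarith)
    simp only [mul_add_one, multipleSum_succ]
    push_cast
    ring_nf at h ih ⊢
    linarith

theorem multipleSum_six_le {f : ℝ → ℝ} (hf : ConvexOn ℝ (Ici 5) f) {N : ℕ} (hN : 1 ≤ N) :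
    multipleSum f 6 (2 * N) ≤ 2 * multipleSum f 12 N + f 6 - f 12 / 2 - f (12 * N) / 2 := by
  induction N, hN using Nat.le_induction with
  | base =>
    have hsix : multipleSum f 6 2 = f 6 + f 12 := by
      norm_num [multipleSum, Finset.sum_Icc_succ_top]
    have htwelve : multipleSum f 12 1 = f 12 := by simp [multipleSum]
    rw [mul_one, hsix, htwelve, Nat.cast_one, mul_one]
    linarith
  | succ N hN ih =>
    have hN : (1 : ℝ) ≤ N := by exact_mod_cast hN
    have h := two_mul_le_add_of_convexOn hf (x := 12 * N)
      (δ := 6) (mem_Ici.2 (by linarith)) (mem_Ici.2 (by linarith)) (by norm_num)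
    simp only [mul_add_one, multipleSum_succ]
    push_cast
    ring_nf at h ih ⊢
    linarith

theorem sieveSum_le {f : ℝ → ℝ} (hf : ConvexDecayOn (Ici 5) f) {N : ℕ} (hN : 1 ≤ N) :
    sieveSum f N ≤ f 1 + (f 5 - f 6) := by
  have hN : (1 : ℝ) ≤ N := by exact_mod_cast hN
  have hlast : 0 ≤ f (12 * N + 1) := hf.nonneg (mem_Ici.2 (by linarith))
  have hdiff := hf.antitoneOn (a := 6 * ↑(2 * N) + 5) (b := 6 * ↑(2 * N) + 6)
    (mem_Ici.2 (by push_cast; linarith)) (mem_Ici.2 (by push_cast; linarith)) (by linarith)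
  rw [sieveSum_eq]
  linarith [secondDiffSum_le hf.convexOn (2 * N), two_mul_multipleSum_twelve_le hf.antitoneOn N]

theorem rpow_neg_half_le {t c : ℝ} (ht : 0 < t) (hc : 0 < c) (h : 1 ≤ t * c ^ 2) :
    t ^ (-(1 / 2) : ℝ) ≤ c := by
  rw [Real.rpow_neg ht.le, ← Real.sqrt_eq_rpow]
  refine inv_le_of_inv_le₀ hc (Real.le_sqrt_of_sq_le ?_)
  rw [inv_pow]
  exact (inv_le_iff_one_le_mul₀ (pow_pos hc 2)).2 h

theorem le_rpow_neg_half {t c : ℝ} (ht : 0 < t) (h : t * c ^ 2 ≤ 1) :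
    c ≤ t ^ (-(1 / 2) : ℝ) := by
  rw [Real.rpow_neg ht.le, ← Real.sqrt_eq_rpow, ← Real.sqrt_inv]
  exact Real.le_sqrt_of_sq_le ((le_inv_mul_iff₀ ht).2 h |>.trans_eq (mul_one _))

/- Convexity alone does not pay for the `c`-term of `sieveSum`. The factor `t ^ (-(1 / 2))` makes
the second difference at `6` large enough to absorb the boundary terms that `c` costs. -/
theorem rpow_neg_half_convexity_gap {g : ℝ → ℝ} (hg : ConvexDecayOn (Ici 5) g) :
    0 ≤ (5 : ℝ) ^ (-(1 / 2) : ℝ) * g 5 - 65 / 32 * ((6 : ℝ) ^ (-(1 / 2) : ℝ) * g 6) +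
      (7 : ℝ) ^ (-(1 / 2) : ℝ) * g 7 + 1 / 64 * ((12 : ℝ) ^ (-(1 / 2) : ℝ) * g 12) := by
  have h₆ : g 6 ≤ (g 5 + g 7) / 2 := by
    have := two_mul_le_add_of_convexOn hg.convexOn (x := 5) (δ := 1) (by norm_num) (by norm_num)
      zero_le_one
    norm_num at this
    linarith
  have h₇ : g 7 ≤ 5 / 7 * g 5 + 2 / 7 * g 12 := by
    have := hg.convexOn.2 (mem_Ici.2 (le_refl (5 : ℝ)))
      (mem_Ici.2 (by norm_num : (5 : ℝ) ≤ 12)) (by norm_num : (0 : ℝ) ≤ 5 / 7)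
      (by norm_num : (0 : ℝ) ≤ 2 / 7) (by norm_num)
    norm_num at this
    linarith
  have h₁₂ : g 12 ≤ g 5 := hg.antitoneOn (by norm_num) (by norm_num) (by norm_num)
  have h₅ : 0 ≤ g 5 := hg.nonneg (by norm_num)
  have ha₅ : 0.4472 ≤ (5 : ℝ) ^ (-(1 / 2) : ℝ) := le_rpow_neg_half (by norm_num) (by norm_num)
  have ha₆ : (6 : ℝ) ^ (-(1 / 2) : ℝ) ≤ 0.4083 :=
    rpow_neg_half_le (by norm_num) (by norm_num) (by norm_num)
  have ha₇ : 0.3779 ≤ (7 : ℝ) ^ (-(1 / 2) : ℝ) := le_rpow_neg_half (by norm_num) (by norm_num)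
  have ha₁₂ : 0.2886 ≤ (12 : ℝ) ^ (-(1 / 2) : ℝ) := le_rpow_neg_half (by norm_num) (by norm_num)
  have hg₅ := mul_le_mul_of_nonneg_right ha₅ h₅
  have hg₆ := mul_le_mul_of_nonneg_right ha₆ (hg.nonneg (by norm_num : (6 : ℝ) ∈ Ici 5))
  have hg₇ := mul_le_mul_of_nonneg_right ha₇ (hg.nonneg (by norm_num : (7 : ℝ) ∈ Ici 5))
  have hg₁₂ := mul_le_mul_of_nonneg_right ha₁₂ (hg.nonneg (by norm_num : (12 : ℝ) ∈ Ici 5))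
  linarith

theorem le_sieveSum {f g : ℝ → ℝ} {N : ℕ} (hg : ConvexDecayOn (Ici 5) g)
    (hfg : ∀ t ∈ Ici (5 : ℝ), f t = t ^ (-(1 / 2) : ℝ) * g t) (hN : 1 ≤ N)
    (hlast : f (12 * N + 1) = 0) : f 1 ≤ sieveSum f N := by
  have hf : ConvexDecayOn (Ici 5) f :=
    (((convexDecayOn_rpow_neg (by norm_num : (0 : ℝ) ≤ 1 / 2)).mono
      (Ici_subset_Ioi.2 (by norm_num)) (convex_Ici (5 : ℝ))).mul hg).congr
        fun t ht => (hfg t ht).symm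
  have hgap := rpow_neg_half_convexity_gap hg
  rw [← hfg 5 (by norm_num), ← hfg 6 (by norm_num), ← hfg 7 (by norm_num),
    ← hfg 12 (by norm_num)] at hgap
  have hN' : (1 : ℝ) ≤ N := by exact_mod_cast hN
  have h₁₂ : 0 ≤ f (12 * N) := hf.nonneg (mem_Ici.2 (by linarith))
  have hdiff := le_secondDiffSum hf.convexOn (M := 2 * N) (by linarith)
  rw [sieveSum_eq, hlast]
  linarith [multipleSum_six_le hf.convexOn hN]

theorem sum_Icc_mul_eq_sum_dvd {N M n : ℕ} (hNM : N ≤ M) (hn : 1 ≤ n) {G : ℕ → ℝ}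
    (hG : ∀ k, N < k → G k = 0) :
    ∑ k ∈ Finset.Icc 1 M, G (n * k) = ∑ m ∈ Finset.Icc 1 M with n ∣ m, G m := by
  refine Finset.sum_bij_ne_zero (fun k _ _ => n * k) (fun k hk hGk => ?_)
    (fun k _ _ l _ _ hkl => Nat.eq_of_mul_eq_mul_left hn hkl) (fun m hm hGm => ?_) fun _ _ _ => rfl
  · have hle : n * k ≤ N := not_lt.1 fun h => hGk (hG _ h)
    have hk₁ := (Finset.mem_Icc.1 hk).1
    exact Finset.mem_filter.2
      ⟨Finset.mem_Icc.2 ⟨Nat.mul_pos hn hk₁, hle.trans hNM⟩, dvd_mul_right n k⟩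
  · obtain ⟨hm, k, rfl⟩ := Finset.mem_filter.1 hm
    obtain ⟨hpos, hle⟩ := Finset.mem_Icc.1 hm
    exact ⟨k, Finset.mem_Icc.2 ⟨Nat.pos_of_mul_pos_left hpos,
      (Nat.le_mul_of_pos_left k hn).trans hle⟩, hGm, rfl⟩

theorem sum_vonMangoldt_dvd {N m : ℕ} (hm : 1 ≤ m) (hmN : m ≤ N) :
    ∑ n ∈ Finset.Icc 1 N with n ∣ m, ArithmeticFunction.vonMangoldt n = Real.log m := by
  rw [← ArithmeticFunction.vonMangoldt_sum]
  congr 1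
  ext n
  simp only [Finset.mem_filter, Finset.mem_Icc, Nat.mem_divisors]
  exact ⟨fun h => ⟨h.2, by omega⟩,
    fun h => ⟨⟨Nat.pos_of_dvd_of_pos h.1 hm, (Nat.le_of_dvd hm h.1).trans hmN⟩, h.1⟩⟩

theorem sum_vonMangoldt_mul_sum {N M : ℕ} (hNM : N ≤ M) {G : ℕ → ℝ}
    (hG : ∀ k, N < k → G k = 0) :
    ∑ n ∈ Finset.Icc 1 N, ArithmeticFunction.vonMangoldt n * ∑ k ∈ Finset.Icc 1 M, G (n * k) =
      ∑ m ∈ Finset.Icc 1 M, Real.log m * G m := by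
  calc
    _ = ∑ n ∈ Finset.Icc 1 N, ∑ m ∈ Finset.Icc 1 M,
          if n ∣ m then ArithmeticFunction.vonMangoldt n * G m else 0 :=
      Finset.sum_congr rfl fun n hn => by
        rw [sum_Icc_mul_eq_sum_dvd hNM (Finset.mem_Icc.1 hn).1 hG, Finset.mul_sum,
          Finset.sum_filter]
    _ = ∑ m ∈ Finset.Icc 1 M,
          (∑ n ∈ Finset.Icc 1 N with n ∣ m, ArithmeticFunction.vonMangoldt n) * G m := by
      rw [Finset.sum_comm]
      simp only [Finset.sum_filter, Finset.sum_mul, ite_mul, zero_mul]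
    _ = _ := Finset.sum_congr rfl fun m hm => by
      rcases le_or_gt m N with hmN | hmN
      · rw [sum_vonMangoldt_dvd (Finset.mem_Icc.1 hm).1 hmN]
      · rw [hG m hmN, mul_zero, mul_zero]

/-- The weight `t ^ (-α) * (1 / log t - 1 / L)`, cut off at `t = exp L`. In the theorem `L = log x`,
and the `n`-th summand is `Λ n` times the weight with `α = 1 / 2 + 1 / (2 * L)`. -/
noncomputable def weight (α L t : ℝ) : ℝ :=
  t ^ (-α) * max (1 / Real.log t - 1 / L) 0

/-- The weight `t ^ (-α) * (1 - log t / L)`, cut off at `t = exp L`. For `1 < t` this is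
`log t * weight α L t`; unlike the latter it is also meaningful at `t = 1`. -/
noncomputable def logWeight (α L t : ℝ) : ℝ :=
  t ^ (-α) * max (1 - Real.log t / L) 0

theorem weight_eq_zero {α L t : ℝ} (hL : 0 < L) (ht : L ≤ Real.log t) : weight α L t = 0 := by
  rw [weight, max_eq_right (sub_nonpos.2 (one_div_le_one_div_of_le hL ht)), mul_zero]

theorem log_mul_weight {α L t : ℝ} (ht : 1 < t) :
    Real.log t * weight α L t = logWeight α L t := by
  have hlog := Real.log_pos ht
  rw [weight, logWeight, mul_left_comm, mul_max_of_nonneg _ _ hlog.le, mul_zero, mul_sub,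
    mul_one_div_cancel hlog.ne', mul_one_div]

theorem logWeight_one (α : ℝ) {L : ℝ} : logWeight α L 1 = 1 := by
  simp [logWeight]

theorem log_mul_weight_le {α L t : ℝ} (ht : 1 ≤ t) :
    Real.log t * weight α L t ≤ logWeight α L t := by
  rcases ht.eq_or_lt with rfl | ht
  · simp [logWeight_one]
  · exact (log_mul_weight ht).le

theorem logWeight_le {α L t : ℝ} (hL : 0 < L) (ht : 1 ≤ t) : logWeight α L t ≤ t ^ (-α) :=
  mul_le_of_le_one_right (Real.rpow_nonneg (zero_le_one.trans ht) _)
    (max_le (sub_le_self _ (div_nonneg (Real.log_nonneg ht) hL.le)) zero_le_one)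

theorem convexDecayOn_weight {α L : ℝ} (hα : 0 ≤ α) : ConvexDecayOn (Ioi 1) (weight α L) := by
  have hinv : ConvexDecayOn (Ioi 0) fun u : ℝ => max (1 / u - 1 / L) 0 := by
    refine ConvexDecayOn.max_zero ?_ fun u hu v _ huv =>
      sub_le_sub_right (one_div_le_one_div_of_le hu huv) _
    exact (((convexOn_zpow (-1)).congr fun u _ => by rw [zpow_neg_one, one_div]).add_const
      (-(1 / L)))
  exact ((convexDecayOn_rpow_neg hα).mono (Ioi_subset_Ioi zero_le_one) (convex_Ioi 1)).mul
    (hinv.comp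
      (strictConcaveOn_log_Ioi.concaveOn.subset (Ioi_subset_Ioi zero_le_one) (convex_Ioi 1))
      (Real.strictMonoOn_log.monotoneOn.mono (Ioi_subset_Ioi zero_le_one))
      fun _ ht => Real.log_pos ht)

theorem convexDecayOn_logWeight {α L : ℝ} (hα : 0 ≤ α) (hL : 0 < L) :
    ConvexDecayOn (Ioi 0) (logWeight α L) := by
  have hlin : ConvexDecayOn univ fun u : ℝ => max (1 - u / L) 0 := by
    refine ConvexDecayOn.max_zero ⟨convex_univ, fun u _ v _ a b _ _ hab => ?_⟩ fun u _ v _ huv =>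
      sub_le_sub_left (div_le_div_of_nonneg_right huv hL.le) _
    rw [← eq_sub_iff_add_eq'] at hab
    simp only [smul_eq_mul, hab]
    exact le_of_eq (by ring)
  exact (convexDecayOn_rpow_neg hα).mul (hlin.comp strictConcaveOn_log_Ioi.concaveOn
    Real.strictMonoOn_log.monotoneOn (mapsTo_univ _ _))

theorem weight_mul {α L a t : ℝ} (γ : ℝ) (ha : 0 < a) (ht : 0 < t) :
    weight α L (a * t) = t ^ (-γ) * (a ^ (-γ) * weight (α - γ) L (a * t)) := by
  rw [weight, weight, ← mul_assoc, ← mul_assoc, mul_comm (t ^ (-γ)), ← Real.mul_rpow ha.le ht.le,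
    ← Real.rpow_add (mul_pos ha ht)]
  ring_nf

theorem weight_le_sieveSum {α L : ℝ} (hα : 1 / 2 ≤ α) {n N : ℕ} (hn : 1 ≤ n)
    (hN : 1 ≤ N) (hzero : ∀ k : ℕ, N < k → weight α L k = 0) :
    weight α L n ≤ sieveSum (fun t => weight α L (n * t)) N := by
  have hn₁ : (1 : ℝ) ≤ n := by exact_mod_cast hn
  have hn₀ : (0 : ℝ) < n := zero_lt_one.trans_le hn₁
  have hdil : ConvexDecayOn (Ici 5) fun t => weight (α - 1 / 2) L (n * t) := by
    refine (convexDecayOn_weight (sub_nonneg.2 hα)).comp (f := fun t => n * t)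
      ((LinearMap.mulLeft ℝ (n : ℝ)).concaveOn (convex_Ici 5))
      (fun t _ u _ htu => mul_le_mul_of_nonneg_left htu hn₀.le) fun t ht => ?_
    have : (5 : ℝ) ≤ t := ht
    exact mem_Ioi.2 (by nlinarith)
  have h := le_sieveSum (f := fun t => weight α L (n * t)) (hdil.const_mul
    (Real.rpow_nonneg hn₀.le (-(1 / 2)))) (fun t ht => weight_mul _ hn₀
      (lt_of_lt_of_le (by norm_num) (mem_Ici.1 ht))) hN ?_
  · simpa only [mul_one] using h
  · have hlt : N < n * (12 * N + 1) := by nlinarith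
    exact_mod_cast hzero _ hlt

theorem sum_vonMangoldt_mul_multipleSum {f : ℝ → ℝ} {N M d : ℕ} (hNM : N ≤ M) (hd : 1 ≤ d)
    (hzero : ∀ k : ℕ, N < k → f k = 0) :
    ∑ n ∈ Finset.Icc 1 N, ArithmeticFunction.vonMangoldt n * multipleSum (fun t => f (n * t)) d M =
      ∑ k ∈ Finset.Icc 1 M, Real.log k * f (d * k) := by
  have h := sum_vonMangoldt_mul_sum hNM (G := fun k => f (d * k)) fun k hk => by
    exact_mod_cast hzero (d * k) (hk.trans_le (Nat.le_mul_of_pos_left k hd))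
  simpa only [multipleSum, Nat.cast_mul, mul_left_comm] using h

theorem sum_log_mul_weight_one_le (α L : ℝ) (M : ℕ) :
    ∑ k ∈ Finset.Icc 1 M, Real.log k * weight α L ((1 : ℕ) * k) ≤
      multipleSum (logWeight α L) 1 M :=
  Finset.sum_le_sum fun k hk => by
    simpa only [Nat.cast_one, one_mul] using
      log_mul_weight_le (Nat.one_le_cast.2 (Finset.mem_Icc.1 hk).1)

theorem sum_log_mul_weight_eq (α L : ℝ) {d : ℕ} (hd : 2 ≤ d) (M : ℕ) :
    ∑ k ∈ Finset.Icc 1 M, Real.log k * weight α L (d * k) =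
      multipleSum (logWeight α L) d M - Real.log d * multipleSum (weight α L) d M := by
  rw [multipleSum, multipleSum, Finset.mul_sum, ← Finset.sum_sub_distrib]
  refine Finset.sum_congr rfl fun k hk => ?_
  have hk₁ : (1 : ℝ) ≤ k := Nat.one_le_cast.2 (Finset.mem_Icc.1 hk).1
  have hd₂ : (2 : ℝ) ≤ d := by exact_mod_cast hd
  rw [← log_mul_weight (by nlinarith), Real.log_mul (by positivity) (by positivity)]
  ring

theorem sum_vonMangoldt_mul_weight_le_sieveSum {α L : ℝ} (hα : 1 / 2 ≤ α) {N : ℕ} (hN : 1 ≤ N)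
    (hzero : ∀ k : ℕ, N < k → weight α L k = 0) :
    ∑ n ∈ Finset.Icc 1 N, ArithmeticFunction.vonMangoldt n * weight α L n ≤
      sieveSum (logWeight α L) N + Real.log 2 * multipleSum (weight α L) 2 (6 * N) +
        Real.log 3 * multipleSum (weight α L) 3 (4 * N) +
        33 / 32 * (Real.log 6 * multipleSum (weight α L) 6 (2 * N)) -
        1 / 16 * (Real.log 12 * multipleSum (weight α L) 12 N) := by
  have hle : ∑ n ∈ Finset.Icc 1 N, ArithmeticFunction.vonMangoldt n * weight α L n ≤
      ∑ n ∈ Finset.Icc 1 N, ArithmeticFunction.vonMangoldt n *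
        sieveSum (fun t => weight α L (n * t)) N :=
    Finset.sum_le_sum fun n hn => mul_le_mul_of_nonneg_left
      (weight_le_sieveSum hα (Finset.mem_Icc.1 hn).1 hN hzero)
      ArithmeticFunction.vonMangoldt_nonneg
  refine hle.trans ?_
  simp only [sieveSum, mul_sub, mul_add, mul_left_comm _ (33 / 32 : ℝ),
    mul_left_comm _ (1 / 16 : ℝ), Finset.sum_sub_distrib, Finset.sum_add_distrib, ← Finset.mul_sum]
  rw [sum_vonMangoldt_mul_multipleSum (d := 1) (by linarith) le_rfl hzero,
    sum_vonMangoldt_mul_multipleSum (d := 2) (by linarith) (by norm_num) hzero,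
    sum_vonMangoldt_mul_multipleSum (d := 3) (by linarith) (by norm_num) hzero,
    sum_vonMangoldt_mul_multipleSum (d := 6) (by linarith) (by norm_num) hzero,
    sum_vonMangoldt_mul_multipleSum (d := 12) le_rfl (by norm_num) hzero,
    sum_log_mul_weight_eq α L (by norm_num : 2 ≤ 2),
    sum_log_mul_weight_eq α L (by norm_num : 2 ≤ 3),
    sum_log_mul_weight_eq α L (by norm_num : 2 ≤ 6),
    sum_log_mul_weight_eq α L (by norm_num : 2 ≤ 12)]
  have := sum_log_mul_weight_one_le α L (12 * N)
  push_cast at this ⊢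
  linarith

theorem logWeight_sub_le {α L a b : ℝ} (hα : 0 ≤ α) (hL : 0 < L) (ha : 1 ≤ a) (hab : a ≤ b) :
    logWeight α L a - logWeight α L b ≤ a ^ (-α) * ((α + 1 / L) * Real.log (b / a)) := by
  have ha₀ : 0 < a := zero_lt_one.trans_le ha
  have hb₀ : 0 < b := ha₀.trans_le hab
  have hlog := Real.log_div hb₀.ne' ha₀.ne'
  have hδ : 0 ≤ Real.log (b / a) := Real.log_nonneg ((one_le_div ha₀).2 hab)
  have hpow : a ^ (-α) * (1 - α * Real.log (b / a)) ≤ b ^ (-α) := by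
    have hb : b ^ (-α) = a ^ (-α) * Real.exp (-(α * Real.log (b / a))) := by
      rw [Real.rpow_def_of_pos hb₀, Real.rpow_def_of_pos ha₀, ← Real.exp_add, hlog]
      ring_nf
    rw [hb]
    exact mul_le_mul_of_nonneg_left (by linarith [Real.add_one_le_exp (-(α * Real.log (b / a)))])
      (Real.rpow_nonneg ha₀.le _)
  set p := max (1 - Real.log a / L) 0
  set q := max (1 - Real.log b / L) 0
  have hq₁ : q ≤ 1 := max_le
    (sub_le_self _ (div_nonneg (Real.log_nonneg (ha.trans hab)) hL.le)) zero_le_one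
  have hpq : p ≤ q + 1 / L * Real.log (b / a) := by
    refine max_le ?_ (by positivity)
    calc 1 - Real.log a / L = (1 - Real.log b / L) + 1 / L * Real.log (b / a) := by
          rw [hlog]; ring
      _ ≤ _ := by gcongr; exact le_max_left _ _
  calc logWeight α L a - logWeight α L b = a ^ (-α) * p - b ^ (-α) * q := rfl
    _ ≤ a ^ (-α) * (q + 1 / L * Real.log (b / a)) -
        a ^ (-α) * (1 - α * Real.log (b / a)) * q := by gcongr
    _ = a ^ (-α) * ((α * q + 1 / L) * Real.log (b / a)) := by ring
    _ ≤ _ := by gcongr; exact mul_le_of_le_one_right hα hq₁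

theorem mul_midpoint_le_integral_of_convexOn {f : ℝ → ℝ} {a b : ℝ} (hab : a ≤ b)
    (hf : ConvexOn ℝ (Icc a b) f) (hint : IntervalIntegrable f volume a b) :
    (b - a) * f ((a + b) / 2) ≤ ∫ t in a..b, f t := by
  have hreflect : ∫ t in a..b, f (a + b - t) = ∫ t in a..b, f t := by
    rw [intervalIntegral.integral_comp_sub_left, add_sub_cancel_left, add_sub_cancel_right]
  have hint' : IntervalIntegrable (fun t => f (a + b - t)) volume a b := by
    simpa using (hint.comp_sub_left (a + b)).symm
  have hmono : ∫ _ in a..b, 2 * f ((a + b) / 2) ≤ ∫ t in a..b, (f t + f (a + b - t)) := by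
    refine intervalIntegral.integral_mono_on hab (by simp) (hint.add hint') fun t ht => ?_
    have ht' : a + b - t ∈ Icc a b := ⟨by linarith [ht.2], by linarith [ht.1]⟩
    have h := hf.2 ht ht' (by norm_num : (0 : ℝ) ≤ 1 / 2) (by norm_num : (0 : ℝ) ≤ 1 / 2)
      (by norm_num)
    simp only [smul_eq_mul] at h
    rw [show 1 / 2 * t + 1 / 2 * (a + b - t) = (a + b) / 2 by ring] at h
    linarith
  rw [intervalIntegral.integral_add hint hint', hreflect, intervalIntegral.integral_const,
    smul_eq_mul] at hmono
  linarith

theorem mul_sum_Ioc_le_integral {f : ℝ → ℝ} {d : ℝ} {m M : ℕ} (hd : 0 ≤ d) (hmM : m ≤ M)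
    (hf : ConvexDecayOn (Ici (d * (m + 1 / 2))) f) :
    d * ∑ k ∈ Finset.Ioc m M, f (d * k) ≤ ∫ t in (d * (m + 1 / 2))..(d * (M + 1 / 2)), f t := by
  induction M, hmM using Nat.le_induction with
  | base => simp
  | succ M hmM ih =>
    have hM : d * (m + 1 / 2) ≤ d * (M + 1 / 2) := by gcongr
    have hsub : Icc (d * (M + 1 / 2)) (d * (M + 1 + 1 / 2)) ⊆ Ici (d * (m + 1 / 2)) :=
      fun t ht => hM.trans ht.1
    have hint {a b : ℝ} (ha : d * (m + 1 / 2) ≤ a) (hab : a ≤ b) :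
        IntervalIntegrable f volume a b :=
      (hf.antitoneOn.mono fun t ht => ha.trans (uIcc_of_le hab ▸ ht).1).intervalIntegrable
    have hstep : d * f (d * (M + 1)) ≤ ∫ t in (d * (M + 1 / 2))..(d * (M + 1 + 1 / 2)), f t := by
      have hle : d * (M + 1 / 2) ≤ d * (M + 1 + 1 / 2) := by gcongr; linarith
      have h := mul_midpoint_le_integral_of_convexOn hle
        (hf.convexOn.subset hsub (convex_Icc _ _)) (hint hM hle)
      convert h using 3 <;> ring
    rw [Finset.sum_Ioc_succ_top hmM, mul_add]
    push_cast
    rw [← intervalIntegral.integral_add_adjacent_intervals (hint le_rfl hM)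
      (hint hM (by gcongr; linarith))]
    exact add_le_add ih hstep

theorem intervalIntegrable_weight {α L a b : ℝ} (hα : 0 ≤ α) (ha : 1 < a) (hb : 1 < b) :
    IntervalIntegrable (weight α L) volume a b :=
  ((convexDecayOn_weight hα).antitoneOn.mono fun _ ht =>
    (lt_min ha hb).trans_le ht.1).intervalIntegrable

theorem integral_weight_le_integral {α L a b c : ℝ} (hα : 0 ≤ α) (hL : 0 < L) (hc : 1 < c)
    (hca : c ≤ a) (hab : a ≤ b) (hcL : c ≤ Real.exp L) :
    ∫ t in a..b, weight α L t ≤ ∫ t in c..Real.exp L, weight α L t := by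
  have hL₁ : 1 < Real.exp L := hc.trans_le hcL
  have hmax : 1 < max b (Real.exp L) := lt_max_of_lt_right hL₁
  have htail : ∫ t in Real.exp L..max b (Real.exp L), weight α L t = 0 := by
    refine intervalIntegral.integral_zero_ae (Filter.Eventually.of_forall fun t ht => ?_)
    rw [uIoc_of_le (le_max_right _ _)] at ht
    exact weight_eq_zero hL ((Real.le_log_iff_exp_le ((Real.exp_pos L).trans ht.1)).2 ht.1.le)
  calc ∫ t in a..b, weight α L t ≤ ∫ t in c..max b (Real.exp L), weight α L t := by
        refine intervalIntegral.integral_mono_interval hca hab (le_max_left _ _) ?_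
          (intervalIntegrable_weight hα hc hmax)
        exact (ae_restrict_iff' measurableSet_Ioc).2 (Filter.Eventually.of_forall fun t ht =>
          (convexDecayOn_weight hα).nonneg (hc.trans ht.1))
    _ = ∫ t in c..Real.exp L, weight α L t := by
        rw [← intervalIntegral.integral_add_adjacent_intervals
          (intervalIntegrable_weight hα hc hL₁) (intervalIntegrable_weight hα hL₁ hmax), htail,
          add_zero]

theorem mul_sum_Ioc_weight_le_integral {α L c : ℝ} (hα : 0 ≤ α) (hL : 0 < L) (hc : 1 < c)
    (hcL : c ≤ Real.exp L) {d m M : ℕ} (hcd : c ≤ d * (m + 1 / 2)) (hmM : m ≤ M) :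
    d * ∑ k ∈ Finset.Ioc m M, weight α L (d * k) ≤ ∫ t in c..Real.exp L, weight α L t := by
  have hconv : ConvexDecayOn (Ici ((d : ℝ) * (m + 1 / 2))) (weight α L) :=
    (convexDecayOn_weight hα).mono (Ici_subset_Ioi.2 (hc.trans_le hcd)) (convex_Ici _)
  exact (mul_sum_Ioc_le_integral d.cast_nonneg hmM hconv).trans
    (integral_weight_le_integral hα hL hc hcd (by gcongr) hcL)

theorem intervalIntegrable_exp_div {a b : ℝ} (ha : 0 < a) (hb : 0 < b) :
    IntervalIntegrable (fun w => Real.exp w / w) volume a b :=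
  (Real.continuous_exp.continuousOn.div continuousOn_id fun _ hw =>
    ((lt_min ha hb).trans_le hw.1).ne').intervalIntegrable

theorem weight_eq_exp_log {α L t : ℝ} (hα : α < 1) (ht : 1 < t) (htL : Real.log t ≤ L) :
    weight α L t = (Real.exp ((1 - α) * Real.log t) / ((1 - α) * Real.log t) -
      Real.exp ((1 - α) * Real.log t) / ((1 - α) * L)) * ((1 - α) * t⁻¹) := by
  have ht₀ : 0 < t := zero_lt_one.trans ht
  have hlog := Real.log_pos ht
  have hβ : 1 - α ≠ 0 := (sub_pos.2 hα).ne'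
  have hexp : Real.exp ((1 - α) * Real.log t) = t * t ^ (-α) := by
    rw [mul_comm, ← Real.rpow_def_of_pos ht₀, sub_eq_add_neg, Real.rpow_one_add' ht₀.le hβ]
  rw [weight, max_eq_left (sub_nonneg.2 (one_div_le_one_div_of_le hlog htL)), hexp]
  have hL : L ≠ 0 := (hlog.trans_le htL).ne'
  field_simp

theorem integral_weight_eq {α L c : ℝ} (hα : α < 1) (hc : 1 < c) (hcL : c ≤ Real.exp L) :
    ∫ t in c..Real.exp L, weight α L t =
      (∫ w in (1 - α) * Real.log c..(1 - α) * L, Real.exp w / w) -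
        (Real.exp ((1 - α) * L) - c ^ (1 - α)) / ((1 - α) * L) := by
  have hβ : 0 < 1 - α := sub_pos.2 hα
  have hc₀ : 0 < c := zero_lt_one.trans hc
  have hlogc := Real.log_pos hc
  have hL : Real.log c ≤ L := (Real.log_le_iff_le_exp hc₀).2 hcL
  have hpos {t : ℝ} (ht : c ≤ t) : t ≠ 0 := (hc₀.trans_le ht).ne'
  calc ∫ t in c..Real.exp L, weight α L t
      = ∫ t in c..Real.exp L, (((fun w => Real.exp w / w - Real.exp w / ((1 - α) * L)) ∘
          fun t => (1 - α) * Real.log t) t) * ((1 - α) * t⁻¹) := by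
        refine intervalIntegral.integral_congr fun t ht => ?_
        rw [uIcc_of_le hcL] at ht
        exact weight_eq_exp_log hα (hc.trans_le ht.1)
          ((Real.log_le_iff_le_exp (hc₀.trans_le ht.1)).2 ht.2)
    _ = ∫ w in (1 - α) * Real.log c..(1 - α) * Real.log (Real.exp L),
          (Real.exp w / w - Real.exp w / ((1 - α) * L)) := by
        refine intervalIntegral.integral_comp_mul_deriv_of_deriv_nonneg
          (continuousOn_const.mul (Real.continuousOn_log.mono fun t ht => ?_)) (fun t ht => ?_)
          fun t ht => ?_
        all_goals first | rw [uIcc_of_le hcL] at ht | rw [min_eq_left hcL] at ht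
        · exact hpos ht.1
        · exact (Real.hasDerivAt_log (hpos ht.1.le)).const_mul _
        · exact mul_nonneg hβ.le (inv_nonneg.2 (hc₀.trans ht.1).le)
    _ = _ := by
        have hL₀ : 0 < L := hlogc.trans_le hL
        rw [Real.log_exp, intervalIntegral.integral_sub
          (intervalIntegrable_exp_div (mul_pos hβ hlogc) (mul_pos hβ hL₀))
          (intervalIntegral.intervalIntegrable_exp.div_const _),
          intervalIntegral.integral_div, integral_exp, Real.rpow_def_of_pos hc₀,
          mul_comm (1 - α) (Real.log c)]

/- The derivative of `exp w * (1 / w + κ / w ^ 2)` exceeds `exp w / w` as soon as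
`w ≥ 2 * κ / (κ - 1)`, which is `8` for `κ = 4 / 3`. -/
theorem integral_exp_div_le_asymptotic {a b : ℝ} (ha : 8 ≤ a) (hab : a ≤ b) :
    ∫ w in a..b, Real.exp w / w ≤
      Real.exp b * (1 / b + 4 / (3 * b ^ 2)) - Real.exp a * (1 / a + 4 / (3 * a ^ 2)) := by
  have hderiv {w : ℝ} (hw : 0 < w) :
      HasDerivAt (fun w => Real.exp w * (w⁻¹ + 4 / 3 * (w ^ 2)⁻¹))
        (Real.exp w * (w⁻¹ + 4 / 3 * (w ^ 2)⁻¹) +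
          Real.exp w * (-(w ^ 2)⁻¹ + 4 / 3 * (-(2 * w) / (w ^ 2) ^ 2))) w := by
    refine (Real.hasDerivAt_exp w).mul ((hasDerivAt_inv hw.ne').add (HasDerivAt.const_mul _ ?_))
    simpa using (hasDerivAt_pow 2 w).fun_inv (pow_ne_zero 2 hw.ne')
  have hpos {w : ℝ} (hw : a ≤ w) : 0 < w := by linarith
  have h := intervalIntegral.integral_le_sub_of_hasDeriv_right_of_le (φ := fun w => Real.exp w / w)
    hab (fun w hw => (hderiv (hpos hw.1)).continuousAt.continuousWithinAt)
    (fun w hw => (hderiv (hpos hw.1.le)).hasDerivWithinAt)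
    ((intervalIntegrable_iff_integrableOn_Icc_of_le hab).1
      (intervalIntegrable_exp_div (hpos le_rfl) (hpos hab))) fun w hw => ?_
  · simpa only [one_div, div_eq_mul_inv, mul_inv, mul_assoc, inv_inv, one_mul] using h
  · have hw₀ : 0 < w := hpos hw.1.le
    have : 8 ≤ w := ha.trans hw.1.le
    rw [← sub_nonneg, show Real.exp w * (w⁻¹ + 4 / 3 * (w ^ 2)⁻¹) +
      Real.exp w * (-(w ^ 2)⁻¹ + 4 / 3 * (-(2 * w) / (w ^ 2) ^ 2)) - Real.exp w / w =
        Real.exp w * (w - 8) / (3 * w ^ 3) by field_simp; ring]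
    have := sub_nonneg.2 this
    positivity

theorem exp_le_taylor_add {w : ℝ} {n : ℕ} (hw : 0 ≤ w) (hn : 2 * w ≤ n + 2) :
    Real.exp w ≤ ∑ k ∈ Finset.range (n + 1), w ^ k / k.factorial +
      2 * w ^ (n + 1) / (n + 1).factorial := by
  have h := Complex.exp_bound' (x := (w : ℂ)) (n := n + 1) (by
    rw [Complex.norm_real, Real.norm_of_nonneg hw, div_le_iff₀ (by positivity)]
    push_cast
    linarith)
  rw [Complex.norm_real, Real.norm_of_nonneg hw] at h
  norm_cast at h
  rw [Real.norm_eq_abs] at h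
  linarith [le_of_abs_le h, mul_comm (w ^ (n + 1) / ((n + 1).factorial : ℝ)) 2,
    mul_div_assoc 2 (w ^ (n + 1)) ((n + 1).factorial : ℝ)]

theorem integral_exp_div_le_taylor {a b : ℝ} {n : ℕ} (ha : 0 < a) (hab : a ≤ b)
    (hn : 2 * b ≤ n + 2) :
    ∫ w in a..b, Real.exp w / w ≤ Real.log (b / a) +
      ∑ k ∈ Finset.range n, (b ^ (k + 1) - a ^ (k + 1)) / ((k + 1) * (k + 1).factorial) +
      2 * (b ^ (n + 1) - a ^ (n + 1)) / ((n + 1) * (n + 1).factorial) := by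
  have hb : 0 < b := ha.trans_le hab
  have hpoint : ∀ w ∈ Icc a b, Real.exp w / w ≤ w⁻¹ +
      ∑ k ∈ Finset.range n, w ^ k / (k + 1).factorial + 2 * w ^ n / (n + 1).factorial := by
    intro w hw
    have hw₀ : 0 < w := ha.trans_le hw.1
    rw [div_le_iff₀ hw₀]
    refine (exp_le_taylor_add (n := n) hw₀.le (by linarith [hw.2])).trans_eq ?_
    rw [Finset.sum_range_succ', add_mul, add_mul, Finset.sum_mul, inv_mul_cancel₀ hw₀.ne',
      add_comm (1 : ℝ)]
    simp [pow_succ, div_mul_eq_mul_div, mul_assoc]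
  have hinv : IntervalIntegrable (fun w : ℝ => w⁻¹) volume a b :=
    intervalIntegrable_inv_iff.2 (Or.inr fun h => (lt_min ha hb).not_ge h.1)
  have hpow (k : ℕ) (c : ℝ) : IntervalIntegrable (fun w : ℝ => w ^ k / c) volume a b :=
    (by fun_prop : Continuous _).intervalIntegrable a b
  have hsum : IntervalIntegrable (fun w : ℝ => ∑ k ∈ Finset.range n, w ^ k / (k + 1).factorial)
      volume a b := (by fun_prop : Continuous _).intervalIntegrable a b
  have hrem : IntervalIntegrable (fun w : ℝ => 2 * w ^ n / (n + 1).factorial) volume a b :=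
    (by fun_prop : Continuous _).intervalIntegrable a b
  refine (intervalIntegral.integral_mono_on hab (intervalIntegrable_exp_div ha hb)
    ((hinv.add hsum).add hrem) hpoint).trans_eq ?_
  rw [intervalIntegral.integral_add (hinv.add hsum) hrem, intervalIntegral.integral_add hinv hsum,
    integral_inv_of_pos ha hb, intervalIntegral.integral_finsetSum fun k _ => hpow k _]
  simp only [intervalIntegral.integral_div, intervalIntegral.integral_const_mul, integral_pow,
    div_div, mul_div_assoc]

theorem integral_exp_div_le_numeric :
    ∫ w in (0.5218 : ℝ)..9.5, Real.exp w / w ≤ 1604.504 := by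
  have hlog : Real.log (9.5 / 0.5218) ≤ 2.9019 := by
    have h : Real.log (9.5 / 0.5218) = Real.log 2 + 2 * Real.log 3 + Real.log (4750 / 4696.2) := by
      rw [show (9.5 / 0.5218 : ℝ) = 2 * 3 ^ 2 * (4750 / 4696.2) by norm_num,
        Real.log_mul (by norm_num) (by norm_num), Real.log_mul (by norm_num) (by norm_num),
        Real.log_pow, Nat.cast_ofNat]
    have := Real.log_le_sub_one_of_pos (by norm_num : (0 : ℝ) < 4750 / 4696.2)
    linarith [Real.log_two_lt_d9, Real.log_three_lt_d9]
  have h := integral_exp_div_le_taylor (a := 0.5218) (b := 9.5) (n := 29) (by norm_num)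
    (by norm_num) (by norm_num)
  refine h.trans ?_
  norm_num [Finset.sum_range_succ, Nat.factorial] at hlog ⊢
  linarith

theorem le_exp_nine_half : 13359.7 ≤ Real.exp 9.5 := by
  refine (pow_le_pow_iff_left₀ (by norm_num) (Real.exp_pos _).le two_ne_zero).1 ?_
  calc (13359.7 : ℝ) ^ 2 ≤ 2.7182818283 ^ 19 := by norm_num
    _ ≤ Real.exp 1 ^ 19 := by gcongr; exact Real.exp_one_gt_d9.le
    _ = Real.exp 9.5 ^ 2 := by rw [← Real.exp_nat_mul, ← Real.exp_nat_mul]; norm_num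

theorem integral_exp_div_le {a z : ℝ} (ha : 0.5218 ≤ a) (ha' : a ≤ 9.5) (hz : 9.5 ≤ z) :
    ∫ w in a..z, Real.exp w / w ≤ 0.847 + Real.exp z * (1 / z + 4 / (3 * z ^ 2)) := by
  have hsmall : ∫ w in a..9.5, Real.exp w / w ≤ 1604.504 := by
    refine le_trans ?_ integral_exp_div_le_numeric
    refine intervalIntegral.integral_mono_interval ha ha' le_rfl ?_
      (intervalIntegrable_exp_div (by norm_num) (by norm_num))
    refine (ae_restrict_iff' measurableSet_Ioc).2 (Filter.Eventually.of_forall fun w hw => ?_)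
    exact div_nonneg (Real.exp_pos w).le (by linarith [hw.1])
  have hlarge := integral_exp_div_le_asymptotic (by norm_num) hz
  have hnine : 1603.657 ≤ Real.exp 9.5 * (1 / 9.5 + 4 / (3 * 9.5 ^ 2)) := by
    linarith [le_exp_nine_half]
  rw [← intervalIntegral.integral_add_adjacent_intervals (b := 9.5)
    (intervalIntegrable_exp_div (by linarith) (by norm_num))
    (intervalIntegrable_exp_div (by norm_num) (by linarith))]
  linarith

theorem integral_weight_le {α L : ℝ} (hα : 1 / 2 ≤ α) (hα' : α ≤ 0.525)
    (hL : 9.5 ≤ (1 - α) * L) :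
    ∫ t in (3 : ℝ)..Real.exp L, weight α L t ≤
      1.03 + 4 / 3 * Real.exp ((1 - α) * L) / ((1 - α) * L) ^ 2 := by
  have hlog : 0.5218 ≤ (1 - α) * Real.log 3 := by nlinarith [Real.log_three_gt_d9]
  have hlog' : (1 - α) * Real.log 3 ≤ 9.5 := by nlinarith [Real.log_three_lt_d9]
  have hpow : (3 : ℝ) ^ (1 - α) ≤ 1.7321 := by
    calc (3 : ℝ) ^ (1 - α) ≤ 3 ^ (1 / 2 : ℝ) :=
          Real.rpow_le_rpow_of_exponent_le (by norm_num) (by linarith)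
      _ ≤ 1.7321 := by
          rw [← Real.sqrt_eq_rpow, Real.sqrt_le_left (by norm_num)]
          norm_num
  have h3 : 3 ≤ Real.exp L := by
    have : 9.5 ≤ L := by nlinarith
    linarith [Real.add_one_le_exp L]
  rw [integral_weight_eq (by linarith) (by norm_num) h3]
  have hint := integral_exp_div_le hlog hlog' hL
  set z := (1 - α) * L
  have hz : 0 < z := by linarith
  have hthree : (3 : ℝ) ^ (1 - α) / z ≤ 0.18233 := by
    rw [div_le_iff₀ hz]
    linarith
  have hcancel : Real.exp z * (1 / z + 4 / (3 * z ^ 2)) - (Real.exp z - 3 ^ (1 - α)) / z =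
      4 / 3 * Real.exp z / z ^ 2 + 3 ^ (1 - α) / z := by
    field_simp
    ring
  linarith

theorem mul_multipleSum_weight_le_integral {α L c : ℝ} (hα : 0 ≤ α) (hL : 0 < L) (hc : 1 < c)
    (hcL : c ≤ Real.exp L) {d : ℕ} (hcd : c ≤ d / 2) (M : ℕ) :
    d * multipleSum (weight α L) d M ≤ ∫ t in c..Real.exp L, weight α L t :=
  mul_sum_Ioc_weight_le_integral (m := 0) hα hL hc hcL
    (by rw [Nat.cast_zero]; linarith) M.zero_le

theorem mul_multipleSum_weight_le_add_integral {α L c : ℝ} (hα : 0 ≤ α) (hL : 0 < L) (hc : 1 < c)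
    (hcL : c ≤ Real.exp L) {d : ℕ} (hcd : c ≤ 3 * d / 2) {M : ℕ} (hM : 1 ≤ M) :
    d * multipleSum (weight α L) d M ≤ d * weight α L d + ∫ t in c..Real.exp L, weight α L t := by
  rw [multipleSum, ← Finset.add_sum_Ioc_eq_sum_Icc hM, Nat.cast_one, mul_one, mul_add]
  gcongr
  exact mul_sum_Ioc_weight_le_integral hα hL hc hcL (by rw [Nat.cast_one]; linarith) hM

theorem log_mul_multipleSum_weight_le {α L c : ℝ} (hα : 0 ≤ α) (hL : 0 < L) (hc : 1 < c)
    (hcL : c ≤ Real.exp L) {d : ℕ} (hd : 2 ≤ d) (hcd : c ≤ 3 * d / 2) {M : ℕ} (hM : 1 ≤ M) :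
    Real.log d * multipleSum (weight α L) d M ≤
      (d : ℝ) ^ (-α) + Real.log d / d * ∫ t in c..Real.exp L, weight α L t := by
  have hd₁ : (1 : ℝ) < d := by exact_mod_cast hd
  calc Real.log d * multipleSum (weight α L) d M
      = Real.log d / d * (d * multipleSum (weight α L) d M) := by field_simp
    _ ≤ Real.log d / d * (d * weight α L d + ∫ t in c..Real.exp L, weight α L t) := by
        gcongr
        exact mul_multipleSum_weight_le_add_integral hα hL hc hcL hcd hM
    _ = logWeight α L d + Real.log d / d * ∫ t in c..Real.exp L, weight α L t := by
        rw [← log_mul_weight hd₁]; field_simp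
    _ ≤ _ := by gcongr; exact logWeight_le hL hd₁.le

theorem rpow_neg_le_of_half_le {α t c : ℝ} (hα : 1 / 2 ≤ α) (ht : 1 ≤ t) (hc : 0 < c)
    (h : 1 ≤ t * c ^ 2) : t ^ (-α) ≤ c :=
  (Real.rpow_le_rpow_of_exponent_le ht (neg_le_neg hα)).trans
    (rpow_neg_half_le (zero_lt_one.trans_le ht) hc h)

theorem sieveSum_logWeight_le {α L : ℝ} (hα : 1 / 2 ≤ α) (hα' : α ≤ 0.525) (hL : 20 ≤ L) {N : ℕ}
    (hN : 1 ≤ N) : sieveSum (logWeight α L) N ≤ 1.0515 := by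
  have hα₀ : 0 ≤ α := by linarith
  have hL₀ : 0 < L := by linarith
  have hlog : Real.log (6 / 5) ≤ 1 / 5 :=
    (Real.log_le_sub_one_of_pos (by norm_num)).trans_eq (by norm_num)
  have hinv : 1 / L ≤ 0.05 := by rw [div_le_iff₀ hL₀]; linarith
  calc sieveSum (logWeight α L) N
      ≤ logWeight α L 1 + (logWeight α L 5 - logWeight α L 6) :=
        sieveSum_le ((convexDecayOn_logWeight hα₀ hL₀).mono (Ici_subset_Ioi.2 (by norm_num))
          (convex_Ici 5)) hN
    _ ≤ 1 + 5 ^ (-α) * ((α + 1 / L) * Real.log (6 / 5)) :=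
        add_le_add (logWeight_one α).le (logWeight_sub_le hα₀ hL₀ (by norm_num) (by norm_num))
    _ ≤ 1 + 0.4473 * ((0.525 + 0.05) * (1 / 5)) := by
        have hfive : (5 : ℝ) ^ (-α) ≤ 0.4473 :=
          rpow_neg_le_of_half_le hα (by norm_num) (by norm_num) (by norm_num)
        have := Real.log_nonneg (by norm_num : (1 : ℝ) ≤ 6 / 5)
        gcongr
    _ ≤ 1.0515 := by norm_num

theorem log_mul_multipleSum_six_sub_twelve_le {α L : ℝ} (hα : 1 / 2 ≤ α) (hL : 2 ≤ L) {N : ℕ}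
    (hN : 1 ≤ N) :
    33 / 32 * (Real.log 6 * multipleSum (weight α L) 6 (2 * N)) -
        1 / 16 * (Real.log 12 * multipleSum (weight α L) 12 N) ≤
      0.0178 + (Real.log 6 - Real.log 2 / 32) / 6 * ∫ t in (3 : ℝ)..Real.exp L, weight α L t := by
  have hα₀ : 0 ≤ α := by linarith
  have hL₀ : 0 < L := by linarith
  have hlog₂ := Real.log_two_gt_d9
  have hlog₃ := Real.log_three_gt_d9
  have hlog₆ : Real.log 6 = Real.log 2 + Real.log 3 := by
    rw [← Real.log_mul two_ne_zero three_ne_zero]; norm_num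
  have hlog₁₂ : Real.log 12 = Real.log 2 + Real.log 6 := by
    rw [← Real.log_mul two_ne_zero (by norm_num)]; norm_num
  have hconv : ConvexDecayOn (Ici 5) (weight α L) :=
    (convexDecayOn_weight hα₀).mono (Ici_subset_Ioi.2 (by norm_num)) (convex_Ici 5)
  have hpair : multipleSum (weight α L) 6 (2 * N) - weight α L 6 ≤
      2 * multipleSum (weight α L) 12 N := by
    have hN₁ : (1 : ℝ) ≤ N := by exact_mod_cast hN
    linarith [multipleSum_six_le hconv.convexOn hN, hconv.nonneg (t := 12) (by norm_num),
      hconv.nonneg (t := 12 * N) (mem_Ici.2 (by linarith))]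
  have hsix : 6 * multipleSum (weight α L) 6 (2 * N) ≤ ∫ t in (3 : ℝ)..Real.exp L, weight α L t :=
    mul_multipleSum_weight_le_integral (d := 6) hα₀ hL₀ (by norm_num)
      (by linarith [Real.add_one_le_exp L]) (by norm_num) _
  have hfirst : Real.log 12 * weight α L 6 ≤ 1.39 * 0.4083 := by
    have hw : Real.log 6 * weight α L 6 ≤ 0.4083 :=
      (log_mul_weight_le (by norm_num)).trans ((logWeight_le hL₀ (by norm_num)).trans
        (rpow_neg_le_of_half_le hα (by norm_num) (by norm_num) (by norm_num)))
    have hlog : Real.log 12 ≤ 1.39 * Real.log 6 := by linarith [Real.log_two_lt_d9]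
    linarith [mul_le_mul_of_nonneg_right hlog (hconv.nonneg (t := 6) (by norm_num))]
  have hpair' := mul_le_mul_of_nonneg_left hpair (by linarith : 0 ≤ Real.log 12)
  have hsix' := mul_le_mul_of_nonneg_left hsix
    (by linarith : 0 ≤ (Real.log 6 - Real.log 2 / 32) / 6)
  rw [hlog₁₂] at hpair' hfirst ⊢
  linarith

theorem sum_vonMangoldt_mul_weight_le_integral {α L : ℝ} (hα : 1 / 2 ≤ α) (hα' : α ≤ 0.525)
    (hL : 20 ≤ L) {N : ℕ} (hN : 1 ≤ N) (hzero : ∀ k : ℕ, N < k → weight α L k = 0) :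
    ∑ n ∈ Finset.Icc 1 N, ArithmeticFunction.vonMangoldt n * weight α L n ≤
      2.3539 + 1.0078 * ∫ t in (3 : ℝ)..Real.exp L, weight α L t := by
  have hα₀ : 0 ≤ α := by linarith
  have hL₀ : 0 < L := by linarith
  have h3 : 3 ≤ Real.exp L := by linarith [Real.add_one_le_exp L]
  set J := ∫ t in (3 : ℝ)..Real.exp L, weight α L t
  have htwo : Real.log 2 * multipleSum (weight α L) 2 (6 * N) ≤
      2 ^ (-α) + Real.log 2 / 2 * J := by
    exact_mod_cast log_mul_multipleSum_weight_le (d := 2) (c := 3) hα₀ hL₀ (by norm_num) h3 le_rfl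
      (by norm_num) (by linarith : 1 ≤ 6 * N)
  have hthree : Real.log 3 * multipleSum (weight α L) 3 (4 * N) ≤
      3 ^ (-α) + Real.log 3 / 3 * J := by
    exact_mod_cast log_mul_multipleSum_weight_le (d := 3) (c := 3) hα₀ hL₀ (by norm_num) h3
      (by norm_num) (by norm_num) (by linarith : 1 ≤ 4 * N)
  have hpow₂ : (2 : ℝ) ^ (-α) ≤ 0.7072 :=
    rpow_neg_le_of_half_le hα (by norm_num) (by norm_num) (by norm_num)
  have hpow₃ : (3 : ℝ) ^ (-α) ≤ 0.5774 :=
    rpow_neg_le_of_half_le hα (by norm_num) (by norm_num) (by norm_num)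
  have hsix := log_mul_multipleSum_six_sub_twelve_le hα ((by norm_num : (2 : ℝ) ≤ 20).trans hL) hN
  have hcoeff : Real.log 2 / 2 + Real.log 3 / 3 + (Real.log 6 - Real.log 2 / 32) / 6 ≤ 1.0078 := by
    rw [show (6 : ℝ) = 2 * 3 by norm_num, Real.log_mul two_ne_zero three_ne_zero]
    linarith [Real.log_two_lt_d9, Real.log_three_lt_d9]
  have hJ₀ : 0 ≤ J := intervalIntegral.integral_nonneg h3 fun t ht =>
    (convexDecayOn_weight hα₀).nonneg (mem_Ioi.2 (by linarith [ht.1]))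
  linarith [sum_vonMangoldt_mul_weight_le_sieveSum hα hN hzero, sieveSum_logWeight_le hα hα' hL hN,
    mul_le_mul_of_nonneg_right hcoeff hJ₀]

theorem sq_le_mul_exp_half {L : ℝ} (hL : 20 ≤ L) : L ^ 2 ≤ 0.01817 * Real.exp (L / 2) := by
  have hten : 400 ≤ 0.01817 * Real.exp 10 := by
    have : (2.7182818283 : ℝ) ^ 10 ≤ Real.exp 10 := by
      calc (2.7182818283 : ℝ) ^ 10 ≤ Real.exp 1 ^ 10 := by gcongr; exact Real.exp_one_gt_d9.le
        _ = Real.exp 10 := by rw [← Real.exp_nat_mul]; norm_num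
    linarith
  calc L ^ 2 = 400 * (L / 20 - 1 + 1) ^ 2 := by ring
    _ ≤ 400 * Real.exp (L / 20 - 1) ^ 2 := by
        gcongr
        · linarith
        · exact Real.add_one_le_exp _
    _ ≤ 400 * Real.exp (L / 2 - 10) := by
        rw [← Real.exp_nat_mul]
        gcongr
        push_cast
        linarith
    _ ≤ 0.01817 * Real.exp 10 * Real.exp (L / 2 - 10) := by gcongr
    _ = 0.01817 * Real.exp (L / 2) := by rw [mul_assoc, ← Real.exp_add, add_sub_cancel]

theorem exp_div_sq_le {L : ℝ} (hL : 20 ≤ L) :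
    Real.exp ((L - 1) / 2) / ((L - 1) / 2) ^ 2 ≤ 2.6883 * (Real.exp (L / 2) / L ^ 2) := by
  have hhalf : Real.exp (-(1 / 2)) ≤ 0.60654 := by
    refine (pow_le_pow_iff_left₀ (Real.exp_pos _).le (by norm_num) two_ne_zero).1 ?_
    calc Real.exp (-(1 / 2)) ^ 2 = Real.exp (-1) := by rw [← Real.exp_nat_mul]; norm_num
      _ ≤ 0.60654 ^ 2 := Real.exp_neg_one_lt_d9.le.trans (by norm_num)
  calc Real.exp ((L - 1) / 2) / ((L - 1) / 2) ^ 2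
      = Real.exp (L / 2) * Real.exp (-(1 / 2)) / ((L - 1) / 2) ^ 2 := by
        rw [← Real.exp_add]; ring_nf
    _ ≤ Real.exp (L / 2) * 0.60654 / (19 / 40 * L) ^ 2 := by
        gcongr
        linarith
    _ = 0.60654 * (40 / 19) ^ 2 * (Real.exp (L / 2) / L ^ 2) := by field_simp
    _ ≤ 2.6883 * (Real.exp (L / 2) / L ^ 2) := by gcongr; norm_num

theorem sum_vonMangoldt_mul_weight_le {L : ℝ} (hL : 20 ≤ L) {N : ℕ} (hN : 1 ≤ N)
    (hzero : ∀ k : ℕ, N < k → weight (1 / 2 + 1 / (2 * L)) L k = 0) :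
    ∑ n ∈ Finset.Icc 1 N, ArithmeticFunction.vonMangoldt n * weight (1 / 2 + 1 / (2 * L)) L n ≤
      3.675 * Real.exp (L / 2) / L ^ 2 := by
  set α := 1 / 2 + 1 / (2 * L) with hα_def
  have hinv : 1 / (2 * L) ≤ 0.025 := by rw [div_le_iff₀ (by positivity)]; linarith
  have hα : 1 / 2 ≤ α := le_add_of_nonneg_right (by positivity)
  have hα' : α ≤ 0.525 := by linarith
  have hz : (1 - α) * L = (L - 1) / 2 := by rw [hα_def]; field_simp; ring
  have hmain := sum_vonMangoldt_mul_weight_le_integral hα hα' hL hN hzero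
  have hint := integral_weight_le (L := L) hα hα' (by linarith)
  have hconst : 1 ≤ 0.01817 * (Real.exp (L / 2) / L ^ 2) := by
    rw [← mul_div_assoc, one_le_div (by positivity)]
    exact sq_le_mul_exp_half hL
  rw [hz, mul_div_assoc] at hint
  rw [mul_div_assoc]
  linarith [exp_div_sq_le hL]

theorem vonMangoldt_div_mul_log_div_eq {x : ℝ} (α : ℝ) {n : ℕ} (hn : 2 ≤ n) (hnx : n ≤ x) :
    ArithmeticFunction.vonMangoldt n / ((n : ℝ) ^ α * Real.log n) *
        (Real.log (x / n) / Real.log x) =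
      ArithmeticFunction.vonMangoldt n * weight α (Real.log x) n := by
  have hn₁ : (1 : ℝ) < n := by exact_mod_cast hn
  have hn₀ : (0 : ℝ) < n := zero_lt_one.trans hn₁
  have hlog : 0 < Real.log n := Real.log_pos hn₁
  have hle : Real.log n ≤ Real.log x := Real.log_le_log hn₀ hnx
  have hlogx : Real.log x ≠ 0 := (hlog.trans_le hle).ne'
  rw [weight, max_eq_left (sub_nonneg.2 (one_div_le_one_div_of_le hlog hle)),
    Real.log_div (hn₀.trans_le hnx).ne' hn₀.ne', Real.rpow_neg hn₀.le]
  field_simp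

theorem vonMangoldt_sum_upper_bound_general (x : ℝ) (hx : 20 ≤ Real.log x) :
    ∑ n ∈ Finset.Icc 2 ⌊x⌋₊,
        ArithmeticFunction.vonMangoldt n /
          ((n : ℝ) ^ ((1 : ℝ) / 2 + 1 / (2 * Real.log x)) * Real.log n) *
          (Real.log (x / n) / Real.log x) ≤
      3.675 * x ^ ((1 : ℝ) / 2) / (Real.log x) ^ 2 := by
  rcases le_or_gt x 1 with hx₁ | hx₁
  · have hsqrt : 0 ≤ x ^ ((1 : ℝ) / 2) := by rw [← Real.sqrt_eq_rpow]; exact Real.sqrt_nonneg x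
    have hfloor : ⌊x⌋₊ < 2 := (Nat.floor_le_one_of_le_one hx₁).trans_lt one_lt_two
    rw [Finset.Icc_eq_empty_of_lt hfloor, Finset.sum_empty]
    positivity
  have hx₀ : 0 < x := zero_lt_one.trans hx₁
  have hfloor : 1 ≤ ⌊x⌋₊ := Nat.floor_pos.2 hx₁.le
  have hterm := Finset.sum_congr (s₁ := Finset.Icc 2 ⌊x⌋₊) rfl fun n hn =>
    vonMangoldt_div_mul_log_div_eq (1 / 2 + 1 / (2 * Real.log x)) (Finset.mem_Icc.1 hn).1
      ((Nat.le_floor_iff hx₀.le).1 (Finset.mem_Icc.1 hn).2)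
  have hsum := sum_vonMangoldt_mul_weight_le hx hfloor fun k hk =>
    weight_eq_zero (by linarith) (Real.log_le_log hx₀ (Nat.lt_of_floor_lt hk).le)
  rw [← Finset.add_sum_Ioc_eq_sum_Icc hfloor, ArithmeticFunction.vonMangoldt_apply_one, zero_mul,
    zero_add] at hsum
  rw [hterm, Real.rpow_def_of_pos hx₀, mul_one_div]
  exact hsum

/-- Assume the Riemann Hypothesis. Then for every real `x` with
`log x ≥ 20`,
`∑_{2 ≤ n ≤ x} Λ(n)/(n^{1/2 + 1/(2 log x)} log n)·(log(x/n)/log x) ≤ 3.675·x^{1/2}/(log x)²`. -/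
theorem vonMangoldt_sum_upper_bound
    (hRH : ∀ s : ℂ, riemannZeta s = 0 → 0 < s.re → s.re < 1 → s.re = 1 / 2)
    (x : ℝ) (hx : 20 ≤ Real.log x) :
    ∑ n ∈ Finset.Icc 2 ⌊x⌋₊,
        ArithmeticFunction.vonMangoldt n /
          ((n : ℝ) ^ ((1 : ℝ) / 2 + 1 / (2 * Real.log x)) * Real.log n) *
          (Real.log (x / n) / Real.log x) ≤
      3.675 * x ^ ((1 : ℝ) / 2) / (Real.log x) ^ 2 :=
  vonMangoldt_sum_upper_bound_general x hx
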